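/- arXiv:1411.1652 — 3 statements merged into one kernel-verified Lean document; each statement's English description precedes it below -/
import Mathlib

section
/- Let G be a connected simple graph on n ≥ 2 vertices with minimum degree δ, Laplacian L with eigenvalues 0 = λ₁ < λ₂ ≤ … ≤ λ_n. Suppose x : V → ℕ and d : V → ℤ satisfy L x = d, x_k = 0 for some vertex k, and ∑_i |d_i| ≤ 2N for a real number N ≥ 0. Then s := ∑_i x_i satisfies s ≤ 2·n·N·(λ₂ + λ_n·(n−1)/n − δ)/(λ₂·λ_n). -/
/-!
Let `L` be the Laplacian, `J` the all-ones matrix and `M = L + (λ_n / n) J`. The shift moves the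
eigenvalue `0` of `L` on the constant vectors to `λ_n` and keeps the others, so the spectrum of `M`
lies in `[λ₂, λ_n]`. If `y` is `x` minus its mean `s / n`, then `M y = L x = d`, hence
`M⁻¹ d = x - s / n`, and reading this off at the vertex `k` with `x k = 0` gives
`s = -n (M⁻¹ d)_k ≤ n · max |M⁻¹_{kj}| · 2N`.

On `[λ₂, λ_n]` the convex function `1 / t` lies below its chord `(λ₂ + λ_n - t) / (λ₂ λ_n)`, so
`λ₂ λ_n M⁻¹ ≤ λ₂ + λ_n - M` as quadratic forms. The diagonal of the right-hand side is
`λ₂ + λ_n - deg j - λ_n / n`, and the diagonal of a positive semidefinite matrix controls all of its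
entries.
-/

open Matrix

theorem abs_dotProduct_le_mul_sum_abs {ι R : Type*} [Fintype ι] [Ring R] [LinearOrder R]
    [IsStrictOrderedRing R] {v : ι → R} {C : R} (hv : ∀ i, |v i| ≤ C) (w : ι → R) :
    |v ⬝ᵥ w| ≤ C * ∑ i, |w i| :=
  calc |v ⬝ᵥ w| ≤ ∑ i, |v i * w i| := Finset.abs_sum_le_sum_abs _ _
    _ = ∑ i, |v i| * |w i| := by simp only [abs_mul]
    _ ≤ ∑ i, C * |w i| := by gcongr with i; exact hv i
    _ = C * ∑ i, |w i| := (Finset.mul_sum ..).symm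

theorem mem_spectrum_iff_exists_mulVec_eq_smul {ι K : Type*} [Fintype ι] [DecidableEq ι] [Field K]
    {A : Matrix ι ι K} {μ : K} : μ ∈ spectrum K A ↔ ∃ v : ι → K, v ≠ 0 ∧ A *ᵥ v = μ • v := by
  rw [← spectrum_toLin', ← Module.End.hasEigenvalue_iff_mem_spectrum]
  constructor
  · intro hμ
    obtain ⟨v, hv⟩ := hμ.exists_hasEigenvector
    exact ⟨v, hv.2, hv.apply_eq_smul⟩
  · rintro ⟨v, hv0, hv⟩
    exact Module.End.hasEigenvalue_of_hasEigenvector ⟨Module.End.mem_eigenspace_iff.2 hv, hv0⟩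

theorem two_mul_abs_apply_le_of_posSemidef {ι R : Type*} [CommRing R] [LinearOrder R]
    [IsStrictOrderedRing R] [StarRing R] [TrivialStar R] {A : Matrix ι ι R} (hA : A.PosSemidef)
    (i j : ι) : 2 * |A i j| ≤ A i i + A j j := by
  classical
  have hsymm : A j i = A i j := by simpa using hA.1.apply i j
  have quadratic_nonneg (c : R) : 0 ≤ A i i + c * A i j + (c * A i j + c * A j j * c) := by
    simpa [Finsupp.sum_add_index, mul_add, add_mul, hsymm, mul_comm] using
      hA.2 (.single i 1 + .single j c)
  have hadd := quadratic_nonneg 1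
  have hsub := quadratic_nonneg (-1)
  rcases abs_cases (A i j) with h | h <;> linarith

theorem smul_units_inv_le_algebraMap_sub_of_spectrum_subset {A : Type*} [Ring A] [StarRing A]
    [TopologicalSpace A] [Algebra ℝ A] [PartialOrder A] [StarOrderedRing A]
    [ContinuousFunctionalCalculus ℝ A IsSelfAdjoint] {u : Aˣ} (hu : IsSelfAdjoint (u : A)) {a b : ℝ}
    (ha : 0 < a) (hspec : spectrum ℝ (u : A) ⊆ Set.Icc a b) :
    (a * b) • (↑u⁻¹ : A) ≤ algebraMap ℝ A (a + b) - u := by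
  have hcont : ContinuousOn (fun t : ℝ => t⁻¹) (spectrum ℝ (u : A)) :=
    continuousOn_id.inv₀ fun t ht => (ha.trans_le (hspec ht).1).ne'
  have inv_le_chord : ∀ t ∈ spectrum ℝ (u : A), a * b * t⁻¹ ≤ a + b - t := fun t ht => by
    obtain ⟨hat, htb⟩ := hspec ht
    have hprod : 0 ≤ (t - a) * (b - t) := mul_nonneg (sub_nonneg.2 hat) (sub_nonneg.2 htb)
    rw [← div_eq_mul_inv, div_le_iff₀ (ha.trans_le hat)]
    linarith
  calc (a * b) • (↑u⁻¹ : A) = cfc (fun t : ℝ => a * b * t⁻¹) (u : A) := by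
        rw [cfc_const_mul (a * b) _ (u : A) hcont, cfc_inv_id u]
    _ ≤ cfc (fun t : ℝ => a + b - t) (u : A) := cfc_mono inv_le_chord (hcont.const_mul _)
    _ = algebraMap ℝ A (a + b) - u := by
        rw [cfc_sub (fun _ : ℝ => a + b) (fun t : ℝ => t) (u : A), cfc_const (a + b) (u : A),
          cfc_id' ℝ (u : A)]

section SpectrumInIcc

variable {ι : Type*} [Fintype ι] [DecidableEq ι] {M : Matrix ι ι ℝ} {a b : ℝ}

open scoped MatrixOrder in
theorem inv_apply_self_le_of_spectrum_subset (hM : M.IsHermitian) (ha : 0 < a)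
    (hspec : spectrum ℝ M ⊆ Set.Icc a b) (i : ι) : M⁻¹ i i ≤ (a + b - M i i) / (a * b) := by
  obtain ⟨hai, hib⟩ := hspec (hM.eigenvalues_mem_spectrum_real i)
  have hb : 0 < b := ha.trans_le (hai.trans hib)
  obtain ⟨u, rfl⟩ : IsUnit M := spectrum.isUnit_of_zero_notMem ℝ fun h => ha.not_ge (hspec h).1
  have hchord := smul_units_inv_le_algebraMap_sub_of_spectrum_subset hM ha hspec
  have hdiag := (le_iff.1 hchord).diag_nonneg (i := i)
  rw [coe_units_inv] at hdiag
  simp only [Matrix.sub_apply, Matrix.smul_apply, smul_eq_mul, algebraMap_matrix_apply, if_true,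
    Algebra.algebraMap_self, RingHom.id_apply] at hdiag
  rw [le_div_iff₀' (mul_pos ha hb)]
  linarith

theorem abs_inv_apply_le_of_spectrum_subset (hM : M.IsHermitian) (ha : 0 < a)
    (hspec : spectrum ℝ M ⊆ Set.Icc a b) {c : ℝ} (hc : ∀ i, c ≤ M i i) (i j : ι) :
    |M⁻¹ i j| ≤ (a + b - c) / (a * b) := by
  have hM0 : M.PosSemidef := posSemidef_iff_isHermitian_and_spectrum_nonneg.2
    ⟨hM, fun _ hμ => ha.le.trans (hspec hμ).1⟩
  obtain ⟨hai, hib⟩ := hspec (hM.eigenvalues_mem_spectrum_real i)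
  have hb : 0 ≤ b := ha.le.trans (hai.trans hib)
  have hdiag (l : ι) : M⁻¹ l l ≤ (a + b - c) / (a * b) :=
    (inv_apply_self_le_of_spectrum_subset hM ha hspec l).trans (by gcongr; exact hc l)
  linarith [two_mul_abs_apply_le_of_posSemidef hM0.inv i j, hdiag i, hdiag j]

end SpectrumInIcc

section Laplacian

variable {V : Type*} [Fintype V] [DecidableEq V] (G : SimpleGraph V) [DecidableRel G.Adj]

theorem intCast_lapMatrix_mulVec {R : Type*} [NonAssocRing R] (x : V → ℤ) (i : V) :
    (((G.lapMatrix ℤ *ᵥ x) i : ℤ) : R) = (G.lapMatrix R *ᵥ fun j => (x j : R)) i := by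
  simp [SimpleGraph.lapMatrix_mulVec_apply]

theorem sum_lapMatrix_mulVec {R : Type*} [CommRing R] (v : V → R) :
    ∑ i, (G.lapMatrix R *ᵥ v) i = 0 := by
  have one_vecMul : (1 : V → R) ᵥ* G.lapMatrix R = 0 := by
    rw [← mulVec_transpose, (G.isSymm_lapMatrix (R := R)).eq]
    exact G.lapMatrix_mulVec_const_eq_zero
  rw [← one_dotProduct, dotProduct_mulVec, one_vecMul, zero_dotProduct]

/-- The Laplacian with `b` times the orthogonal projection onto the constant vectors added, so that
the eigenvalue `0` on the constant vectors becomes `b`. For connected `G` and `b ≠ 0` it is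
invertible, and its inverse stands in for the pseudoinverse of the Laplacian. -/
noncomputable def shiftedLapMatrix (b : ℝ) : Matrix V V ℝ :=
  G.lapMatrix ℝ + of fun _ _ => b / Fintype.card V

variable {G} {a b : ℝ}

theorem isHermitian_shiftedLapMatrix : (shiftedLapMatrix G b).IsHermitian :=
  (G.isHermitian_lapMatrix (R := ℝ)).add (by ext; simp)

theorem shiftedLapMatrix_apply_self (i : V) :
    shiftedLapMatrix G b i i = G.degree i + b / Fintype.card V := by
  simp [shiftedLapMatrix, SimpleGraph.lapMatrix, SimpleGraph.degMatrix]

theorem shiftedLapMatrix_mulVec_apply (v : V → ℝ) (i : V) :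
    (shiftedLapMatrix G b *ᵥ v) i = (G.lapMatrix ℝ *ᵥ v) i + b / Fintype.card V * ∑ j, v j := by
  simp [shiftedLapMatrix, mulVec, dotProduct, add_mul, Finset.sum_add_distrib, Finset.mul_sum]

theorem sum_shiftedLapMatrix_mulVec (v : V → ℝ) :
    ∑ i, (shiftedLapMatrix G b *ᵥ v) i = b * ∑ i, v i := by
  cases isEmpty_or_nonempty V
  · simp
  · simp only [shiftedLapMatrix_mulVec_apply, Finset.sum_add_distrib, sum_lapMatrix_mulVec,
      Finset.sum_const, Finset.card_univ, nsmul_eq_mul]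
    field_simp
    simp

theorem spectrum_shiftedLapMatrix_subset (hG : G.Connected) :
    spectrum ℝ (shiftedLapMatrix G b) ⊆ insert b (spectrum ℝ (G.lapMatrix ℝ) \ {0}) := by
  have := hG.nonempty
  intro μ hμ
  obtain ⟨v, hv0, hv⟩ := mem_spectrum_iff_exists_mulVec_eq_smul.1 hμ
  have hsum : b * ∑ i, v i = μ * ∑ i, v i := by
    rw [← sum_shiftedLapMatrix_mulVec (G := G), hv]
    simp [Finset.mul_sum]
  rcases eq_or_ne (∑ i, v i) 0 with hmean | hmean
  · have hLv : G.lapMatrix ℝ *ᵥ v = μ • v := by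
      ext i
      rw [← hv, shiftedLapMatrix_mulVec_apply, hmean, mul_zero, add_zero]
    refine .inr ⟨mem_spectrum_iff_exists_mulVec_eq_smul.2 ⟨v, hv0, hLv⟩, ?_⟩
    rintro rfl
    rw [zero_smul, G.lapMatrix_mulVec_eq_zero_iff_forall_reachable] at hLv
    refine hv0 (funext fun i => ?_)
    simpa [Finset.sum_congr rfl fun j _ => hLv j i (hG.preconnected j i)] using hmean
  · exact .inl (mul_right_cancel₀ hmean hsum).symm

theorem isUnit_shiftedLapMatrix (hG : G.Connected) (hb : b ≠ 0) :
    IsUnit (shiftedLapMatrix G b) :=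
  spectrum.isUnit_of_zero_notMem ℝ fun h =>
    (spectrum_shiftedLapMatrix_subset hG h).elim hb.symm fun h0 => h0.2 rfl

theorem inv_shiftedLapMatrix_mulVec_lapMatrix_mulVec (hG : G.Connected) (hb : b ≠ 0) (x : V → ℝ)
    (i : V) :
    ((shiftedLapMatrix G b)⁻¹ *ᵥ (G.lapMatrix ℝ *ᵥ x)) i = x i - (∑ j, x j) / Fintype.card V := by
  have : Nonempty V := ⟨i⟩
  have hdet := (isUnit_iff_isUnit_det _).1 (isUnit_shiftedLapMatrix hG hb)
  set c := (∑ j, x j) / Fintype.card V with hc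
  set y : V → ℝ := x - c • fun _ => 1 with hy
  have hcentered : ∑ j, y j = 0 := by
    simp [hy, hc, Finset.sum_sub_distrib, mul_div_cancel₀]
  have hMy : shiftedLapMatrix G b *ᵥ y = G.lapMatrix ℝ *ᵥ x := by
    ext j
    rw [shiftedLapMatrix_mulVec_apply, hcentered, hy, mulVec_sub, mulVec_smul,
      G.lapMatrix_mulVec_const_eq_zero, smul_zero, sub_zero, mul_zero, add_zero]
  rw [← hMy, mulVec_mulVec, nonsing_inv_mul _ hdet, one_mulVec]
  simp [hy]

theorem abs_inv_shiftedLapMatrix_apply_le (hG : G.Connected) (ha : 0 < a) (hab : a ≤ b)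
    (hspec : spectrum ℝ (G.lapMatrix ℝ) \ {0} ⊆ Set.Icc a b) (i j : V) :
    |(shiftedLapMatrix G b)⁻¹ i j| ≤
      (a + b * ((Fintype.card V : ℝ) - 1) / Fintype.card V - G.minDegree) / (a * b) := by
  have : Nonempty V := ⟨i⟩
  have hdiag (l : V) : G.minDegree + b / Fintype.card V ≤ shiftedLapMatrix G b l l := by
    rw [shiftedLapMatrix_apply_self]
    gcongr
    exact G.minDegree_le_degree l
  have hshift : spectrum ℝ (shiftedLapMatrix G b) ⊆ Set.Icc a b :=
    (spectrum_shiftedLapMatrix_subset hG).trans (Set.insert_subset ⟨hab, le_rfl⟩ hspec)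
  convert abs_inv_apply_le_of_spectrum_subset isHermitian_shiftedLapMatrix ha hshift hdiag i j
    using 2
  field_simp
  ring

end Laplacian

theorem chipFiring_duration_improved_bls_bound_general {V : Type*} [Fintype V] [DecidableEq V]
    {G : SimpleGraph V} [DecidableRel G.Adj] (hG : G.Connected) {a b : ℝ} (ha : 0 < a)
    (hab : a ≤ b) (hspec : spectrum ℝ (G.lapMatrix ℝ) \ {0} ⊆ Set.Icc a b) {x : V → ℝ} {k : V}
    (hk : x k = 0) {N : ℝ} (hN : ∑ i, |(G.lapMatrix ℝ *ᵥ x) i| ≤ 2 * N) :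
    ∑ i, x i ≤ 2 * Fintype.card V * N *
      (a + b * ((Fintype.card V : ℝ) - 1) / Fintype.card V - G.minDegree) / (a * b) := by
  have : Nonempty V := ⟨k⟩
  set n := (Fintype.card V : ℝ)
  set d := G.lapMatrix ℝ *ᵥ x
  set C := (a + b * (n - 1) / n - G.minDegree) / (a * b) with hC
  have hentry := abs_inv_shiftedLapMatrix_apply_le hG ha hab hspec k
  have hmean : ∑ i, x i = n * -((shiftedLapMatrix G b)⁻¹ *ᵥ d) k := by
    rw [inv_shiftedLapMatrix_mulVec_lapMatrix_mulVec hG (ha.trans_le hab).ne', hk]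
    field_simp
    ring
  calc ∑ i, x i ≤ n * |((shiftedLapMatrix G b)⁻¹ *ᵥ d) k| := by
        rw [hmean]
        gcongr
        exact neg_le_abs _
    _ ≤ n * (C * ∑ i, |d i|) := by
        gcongr
        exact abs_dotProduct_le_mul_sum_abs hentry d
    _ ≤ n * (C * (2 * N)) := by
        gcongr
        exact (abs_nonneg _).trans (hentry k)
    _ = 2 * n * N * (a + b * (n - 1) / n - G.minDegree) / (a * b) := by
        rw [hC]
        ring

/-- For a connected graph `G` on `n ≥ 2` vertices with minimum degree `δ` and Laplacian
eigenvalues `0 = λ₁ < λ₂ ≤ … ≤ λ_n`, the duration `s = ∑ i, x i` of a terminating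
chip-firing game with `N` chips satisfies
`s ≤ 2 n N (λ₂ + λ_n (n-1)/n - δ)/(λ₂ λ_n)`. -/
theorem chipFiring_duration_improved_bls_bound
    {n : ℕ} (hn : 2 ≤ n)
    (G : SimpleGraph (Fin n)) [DecidableRel G.Adj]
    (hG : G.Connected)
    (lam2 : ℝ) (hl2pos : 0 < lam2)
    (hl2eig : ∃ v : Fin n → ℝ, v ≠ 0 ∧ G.lapMatrix ℝ *ᵥ v = lam2 • v)
    (hl2min : ∀ μ : ℝ, μ ≠ 0 →
      (∃ v : Fin n → ℝ, v ≠ 0 ∧ G.lapMatrix ℝ *ᵥ v = μ • v) → lam2 ≤ μ)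
    (lamn : ℝ)
    (hlneig : ∃ v : Fin n → ℝ, v ≠ 0 ∧ G.lapMatrix ℝ *ᵥ v = lamn • v)
    (hlnmax : ∀ μ : ℝ,
      (∃ v : Fin n → ℝ, v ≠ 0 ∧ G.lapMatrix ℝ *ᵥ v = μ • v) → μ ≤ lamn)
    (x : Fin n → ℕ) (d : Fin n → ℤ)
    (hLx : G.lapMatrix ℤ *ᵥ (fun i => (x i : ℤ)) = d)
    (k : Fin n) (hk : x k = 0)
    (N : ℝ) (hN0 : 0 ≤ N) (hN : (∑ i, |(d i : ℝ)|) ≤ 2 * N) :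
    ((∑ i, x i : ℕ) : ℝ) ≤
      2 * n * N * (lam2 + lamn * ((n : ℝ) - 1) / n - (G.minDegree : ℝ)) / (lam2 * lamn) := by
  have hspec : spectrum ℝ (G.lapMatrix ℝ) \ {0} ⊆ Set.Icc lam2 lamn := fun μ ⟨hμ, hμ0⟩ =>
    have heig := mem_spectrum_iff_exists_mulVec_eq_smul.1 hμ
    ⟨hl2min μ hμ0 heig, hlnmax μ heig⟩
  have hNreal : ∑ i, |(G.lapMatrix ℝ *ᵥ fun j => (x j : ℝ)) i| ≤ 2 * N := by
    simpa [← hLx, intCast_lapMatrix_mulVec] using hN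
  simpa using chipFiring_duration_improved_bls_bound_general hG hl2pos (hlnmax _ hl2eig) hspec
    (by simpa using hk) hNreal
end

section
/- Let G be a connected d-regular simple graph on n vertices with d > n/2 − 1, let L be its Laplacian, B the Moore–Penrose pseudoinverse of L, and set f = max_i B_{ii}, o = max_{i≠j} |B_{ij}|. Then o ≤ f/(2d − n + 3) + 2/n². -/
open Matrix

/-!
With `J` the all-ones matrix, every column of `1 - L * B` lies in the kernel of `L`, hence is
constant, and sums to one because the columns of `L` sum to zero; so `L * B = 1 - J / n`. The
columns of `B` sum to zero as well. Since `L + J = (d + 1) + A(Gᶜ)`, the column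
`x = B · j` satisfies `(d + 1) * x i + ∑ k ∈ N(i), x k = -1 / n` for `i ≠ j`, where
`N(i)` is the set of the `c = n - 1 - d < d + 1` non-neighbours of `i`.

Let `i ≠ j` maximise `|x i|` and put `D = d + 1`. As `x j ≥ 0`, all entries are at least `-|x i|`,
so the equation gives `x k ≤ u := |x i| - 1 / (n * D)` for all `k ≠ j`. Therefore `x i = -|x i|`,
and the equation at `i` reads `D * u = ∑ k ∈ N(i), x k`. The right side is at most
`x j + (c - 1) * u` if `j ∈ N(i)`, and `c * u` otherwise; either way `u ≤ x j / (D - c + 1)`.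
-/

section MoorePenrose

variable {m n R : Type*} [Fintype m] [Fintype n]

/-- `B` is the Moore–Penrose pseudoinverse of `A`, expressed by the four Penrose equations. The
last two use conjugate transposes, which over `ℝ` are plain transposes. -/
structure IsMoorePenroseInverse [NonUnitalNonAssocSemiring R] [Star R]
    (A : Matrix m n R) (B : Matrix n m R) : Prop where
  mul_mul_left : A * B * A = A
  mul_mul_right : B * A * B = B
  isHermitian_mul_left : (A * B).IsHermitian
  isHermitian_mul_right : (B * A).IsHermitian

namespace IsMoorePenroseInverse

lemma mul_comm_of_isHermitian [NonUnitalSemiring R] [StarRing R] {A B : Matrix n n R}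
    (h : IsMoorePenroseInverse A B) (hA : A.IsHermitian) : A * B = B * A := by
  have hAB : Bᴴ * A = A * B := by simpa [hA.eq] using h.isHermitian_mul_left.eq
  have hBA : A * Bᴴ = B * A := by simpa [hA.eq] using h.isHermitian_mul_right.eq
  have hABA : A * Bᴴ * A = A := by
    simpa [hA.eq, Matrix.mul_assoc] using congrArg conjTranspose h.mul_mul_left
  calc A * B = A * Bᴴ * A * B := by rw [hABA]
    _ = B * A * (Bᴴ * A) := by rw [hBA, hAB, Matrix.mul_assoc]
    _ = B * (A * Bᴴ * A) := by simp only [Matrix.mul_assoc]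
    _ = B * A := by rw [hABA]

lemma mulVec_eq_zero [NonUnitalSemiring R] [StarRing R] {A B : Matrix n n R}
    (h : IsMoorePenroseInverse A B) (hA : A.IsHermitian) {v : n → R} (hv : A *ᵥ v = 0) :
    B *ᵥ v = 0 := by
  rw [← h.mul_mul_right, Matrix.mul_assoc, h.mul_comm_of_isHermitian hA, ← mulVec_mulVec,
    ← mulVec_mulVec, hv, mulVec_zero, mulVec_zero]

lemma posSemidef [Ring R] [PartialOrder R] [StarRing R] {A B : Matrix n n R}
    (h : IsMoorePenroseInverse A B) (hA : A.PosSemidef) : B.PosSemidef := by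
  have hB : Bᴴ * A * B = B := by
    calc Bᴴ * A * B = A * B * B := by
          rw [← h.isHermitian_mul_left.eq, conjTranspose_mul, hA.isHermitian.eq]
      _ = B * A * B := by rw [h.mul_comm_of_isHermitian hA.isHermitian]
      _ = B := h.mul_mul_right
  exact hB ▸ hA.conjTranspose_mul_mul_same B

end IsMoorePenroseInverse

end MoorePenrose

section Laplacian

variable {V : Type*} [Fintype V] [DecidableEq V] (G : SimpleGraph V) [DecidableRel G.Adj]

lemma lapMatrix_mulVec_add_sum {R : Type*} [NonAssocRing R] (x : V → R) (i : V) :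
    (G.lapMatrix R *ᵥ x) i + ∑ k, x k =
      (G.degree i + 1) * x i + ∑ k ∈ Gᶜ.neighborFinset i, x k := by
  have hi : i ∈ (G.neighborFinset i)ᶜ := by simp
  rw [G.lapMatrix_mulVec_apply, ← Finset.sum_add_sum_compl (G.neighborFinset i),
    ← Finset.add_sum_erase _ _ hi, Finset.erase_eq, ← G.neighborFinset_compl, add_mul, one_mul]
  abel

lemma cast_degree_compl {R : Type*} [AddGroupWithOne R] (i : V) :
    (Gᶜ.degree i : R) = Fintype.card V - 1 - G.degree i := by
  rw [G.degree_compl, Nat.cast_sub (Nat.le_sub_one_of_lt (G.degree_lt_card_verts i)),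
    Nat.cast_pred (Fintype.card_pos_iff.mpr ⟨i⟩)]

lemma sum_lapMatrix_mul_apply {m R : Type*} [NonAssocRing R] (M : Matrix V m R) (j : m) :
    ∑ k, (G.lapMatrix R * M) k j = 0 := by
  have hcol (l : V) : ∑ k, G.lapMatrix R k l = 0 := by
    simpa [mulVec, dotProduct, (G.isSymm_lapMatrix R).apply] using
      congrFun (G.lapMatrix_mulVec_const_eq_zero (R := R)) l
  simp only [mul_apply]
  rw [Finset.sum_comm]
  simp only [← Finset.sum_mul, hcol, zero_mul, Finset.sum_const_zero]

variable {G}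

lemma eq_of_lapMatrix_mul_eq_zero {m : Type*} (hG : G.Preconnected) {M : Matrix V m ℝ}
    (hM : G.lapMatrix ℝ * M = 0) (i k : V) (j : m) : M i j = M k j := by
  have hcol : G.lapMatrix ℝ *ᵥ M.col j = 0 := funext fun a ↦ congrFun (congrFun hM a) j
  exact G.lapMatrix_mulVec_eq_zero_iff_forall_reachable.mp hcol i k (hG i k)

namespace IsMoorePenroseInverse

variable {B : Matrix V V ℝ}

lemma sum_col_eq_zero (h : IsMoorePenroseInverse (G.lapMatrix ℝ) B) (j : V) :
    ∑ k, B k j = 0 := by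
  have hrow : B *ᵥ (fun _ ↦ 1) = 0 :=
    h.mulVec_eq_zero (G.isHermitian_lapMatrix ℝ) G.lapMatrix_mulVec_const_eq_zero
  have hsymm : B.IsSymm := isHermitian_iff_isSymm.mp (h.posSemidef (G.posSemidef_lapMatrix ℝ)).1
  simpa [mulVec, dotProduct, hsymm.apply] using congrFun hrow j

lemma lapMatrix_mul_apply (h : IsMoorePenroseInverse (G.lapMatrix ℝ) B) (hG : G.Preconnected)
    (i j : V) : (G.lapMatrix ℝ * B) i j = (1 : Matrix V V ℝ) i j - 1 / Fintype.card V := by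
  set M : Matrix V V ℝ := 1 - G.lapMatrix ℝ * B with hM
  have hker : G.lapMatrix ℝ * M = 0 := by
    rw [hM, mul_sub, mul_one, h.mul_comm_of_isHermitian (G.isHermitian_lapMatrix ℝ), ← mul_assoc,
      h.mul_mul_left, sub_self]
  have hcard : Fintype.card V * M i j = 1 := by
    calc Fintype.card V * M i j = ∑ k, M k j := by
          simp [fun k ↦ eq_of_lapMatrix_mul_eq_zero hG hker k i j]
      _ = 1 := by simp [hM, Matrix.one_apply, sum_lapMatrix_mul_apply]
  rw [← eq_one_div_of_mul_eq_one_right hcard, hM, Matrix.sub_apply, sub_sub_cancel]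

lemma degree_succ_mul_apply_add_sum_compl (h : IsMoorePenroseInverse (G.lapMatrix ℝ) B)
    (hG : G.Preconnected) {i j : V} (hij : i ≠ j) :
    (G.degree i + 1) * B i j + ∑ k ∈ Gᶜ.neighborFinset i, B k j = -(1 / Fintype.card V) := by
  have hLB : (G.lapMatrix ℝ *ᵥ B.col j) i = -(1 / Fintype.card V) := by
    rw [← zero_sub, ← Matrix.one_apply_ne (α := ℝ) hij, ← h.lapMatrix_mul_apply hG]
    rfl
  have hsum : ∑ k, B.col j k = 0 := h.sum_col_eq_zero j
  calc (G.degree i + 1) * B i j + ∑ k ∈ Gᶜ.neighborFinset i, B k j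
      = (G.lapMatrix ℝ *ᵥ B.col j) i + ∑ k, B.col j k :=
        (lapMatrix_mulVec_add_sum G (B.col j) i).symm
    _ = -(1 / Fintype.card V) := by rw [hLB, hsum, add_zero]

end IsMoorePenroseInverse

end Laplacian

section MaximumPrinciple

variable {ι K : Type*} [Field K] [LinearOrder K] [IsStrictOrderedRing K]
  {x : ι → K} {c D e : K} {i j : ι}

lemma le_sub_div_of_mul_add_sum_eq_neg {s : Finset ι} {o : K} (hs : s.card ≤ D) (hD : 0 < D)
    (ho : 0 ≤ o) (hlow : ∀ k ∈ s, -o ≤ x k) (hx : D * x i + ∑ k ∈ s, x k = -e) :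
    x i ≤ o - e / D := by
  have hsum : -(D * o) ≤ ∑ k ∈ s, x k :=
    calc -(D * o) ≤ s.card * -o := by rw [mul_neg]; gcongr
      _ ≤ ∑ k ∈ s, x k := by simpa using s.card_nsmul_le_sum x (-o) hlow
  rw [sub_div' hD.ne', le_div_iff₀ hD]
  linarith

lemma le_div_of_mul_le_sum {s : Finset ι} {u : K} (hs : s.card ≤ c) (hcD : c < D)
    (hj : 0 ≤ x j) (hup : ∀ k ≠ j, x k ≤ u) (hu : D * u ≤ ∑ k ∈ s, x k) :
    u ≤ x j / (D - c + 1) := by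
  classical
  have hden : 0 < D - c + 1 := by linarith
  obtain hu0 | hu0 := le_or_gt u 0
  · exact hu0.trans (div_nonneg hj hden.le)
  rw [le_div_iff₀ hden]
  have hcu : s.card * u ≤ c * u := mul_le_mul_of_nonneg_right hs hu0.le
  by_cases hjs : j ∈ s
  · have hcard : ((s.erase j).card : K) = s.card - 1 := Finset.cast_card_erase_of_mem hjs
    have hsum : ∑ k ∈ s.erase j, x k ≤ (s.card - 1) * u := by
      simpa [hcard] using (s.erase j).sum_le_card_nsmul x u fun k hk ↦ hup k (s.ne_of_mem_erase hk)
    rw [← Finset.add_sum_erase s x hjs] at hu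
    linarith
  · have hsum : ∑ k ∈ s, x k ≤ s.card * u := by
      simpa using s.sum_le_card_nsmul x u fun k hk ↦ hup k (ne_of_mem_of_not_mem hk hjs)
    exact absurd (hu.trans (hsum.trans hcu)) (mul_lt_mul_of_pos_right hcD hu0).not_ge

lemma abs_le_div_add_div_of_mul_add_sum_eq_neg [Finite ι] {N : ι → Finset ι}
    (hN : ∀ i, (N i).card ≤ c) (hcD : c < D) (he : 0 < e) (hj : 0 ≤ x j)
    (hx : ∀ i ≠ j, D * x i + ∑ k ∈ N i, x k = -e) (hij : i ≠ j) :
    |x i| ≤ x j / (D - c + 1) + e / D := by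
  have hD : 0 < D := ((Nat.cast_nonneg _).trans (hN i)).trans_lt hcD
  have : Nonempty {k // k ≠ j} := ⟨⟨i, hij⟩⟩
  obtain ⟨⟨a, haj⟩, hmax⟩ := Finite.exists_max fun k : {k // k ≠ j} ↦ |x k|
  have hlow (k : ι) : -|x a| ≤ x k := by
    obtain rfl | hk := eq_or_ne k j
    · exact (neg_nonpos.mpr (abs_nonneg _)).trans hj
    · exact neg_le_of_abs_le (hmax ⟨k, hk⟩)
  have hup (k : ι) (hk : k ≠ j) : x k ≤ |x a| - e / D :=
    le_sub_div_of_mul_add_sum_eq_neg ((hN k).trans hcD.le) hD (abs_nonneg _) (fun l _ ↦ hlow l)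
      (hx k hk)
  have hlt : x a < |x a| := (hup a haj).trans_lt (sub_lt_self _ (div_pos he hD))
  have hneg : |x a| = -x a := abs_of_neg (lt_of_not_ge fun h ↦ (abs_of_nonneg h).not_gt hlt)
  have hsum : D * (|x a| - e / D) = ∑ k ∈ N a, x k := by
    rw [mul_sub, mul_div_cancel₀ e hD.ne', hneg]
    linear_combination -hx a haj
  have ha := le_div_of_mul_le_sum (hN a) hcD hj hup hsum.le
  linarith [hmax ⟨i, hij⟩]

end MaximumPrinciple

theorem lapMatrix_pinv_offdiag_bound_of_dense_regular_general
    {V : Type*} [Fintype V] [DecidableEq V] {G : SimpleGraph V} [DecidableRel G.Adj] {d : ℕ}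
    (hG : G.Preconnected) (hreg : G.IsRegularOfDegree d)
    (hd : (Fintype.card V : ℝ) / 2 - 1 < d)
    {B : Matrix V V ℝ} (hB : IsMoorePenroseInverse (G.lapMatrix ℝ) B) {i j : V} (hij : i ≠ j) :
    |B i j| ≤ B j j / (2 * d - Fintype.card V + 3) + 1 / (Fintype.card V * (d + 1)) := by
  have hcard (k : V) : ((Gᶜ.neighborFinset k).card : ℝ) ≤ Fintype.card V - 1 - d := by
    rw [Gᶜ.card_neighborFinset_eq_degree, cast_degree_compl, hreg k]
  have hlt : (Fintype.card V : ℝ) - 1 - d < d + 1 := by linarith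
  have hpos : (0 : ℝ) < 1 / Fintype.card V :=
    one_div_pos.mpr (Nat.cast_pos.mpr (Fintype.card_pos_iff.mpr ⟨i⟩))
  have hdiag : 0 ≤ B j j := (hB.posSemidef (G.posSemidef_lapMatrix ℝ)).diag_nonneg
  have hcol (k : V) (hk : k ≠ j) :
      ((d : ℝ) + 1) * B k j + ∑ l ∈ Gᶜ.neighborFinset k, B l j = -(1 / Fintype.card V) :=
    hreg k ▸ hB.degree_succ_mul_apply_add_sum_compl hG hk
  calc |B i j|
      ≤ B j j / (d + 1 - (Fintype.card V - 1 - d) + 1) + 1 / Fintype.card V / (d + 1) :=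
        abs_le_div_add_div_of_mul_add_sum_eq_neg (x := B.col j) hcard hlt hpos hdiag hcol hij
    _ = B j j / (2 * d - Fintype.card V + 3) + 1 / (Fintype.card V * (d + 1)) := by
        rw [div_div]
        ring_nf

/-- For a connected `d`-regular graph on `n` vertices with `d > n/2 - 1`, the largest
absolute value `o` of an off-diagonal entry of the Moore–Penrose pseudoinverse `B` of
the Laplacian and the largest diagonal entry `f` of `B` satisfy
`o ≤ f/(2d - n + 3) + 2/n²`. -/
theorem lapMatrix_pinv_offdiag_bound_of_dense_regular
    {n d : ℕ}
    (G : SimpleGraph (Fin n)) [DecidableRel G.Adj]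
    (hG : G.Connected)
    (hreg : G.IsRegularOfDegree d)
    (hd : (n : ℝ) / 2 - 1 < (d : ℝ))
    (B : Matrix (Fin n) (Fin n) ℝ)
    (hB1 : G.lapMatrix ℝ * B * G.lapMatrix ℝ = G.lapMatrix ℝ)
    (hB2 : B * G.lapMatrix ℝ * B = B)
    (hB3 : (G.lapMatrix ℝ * B)ᵀ = G.lapMatrix ℝ * B)
    (hB4 : (B * G.lapMatrix ℝ)ᵀ = B * G.lapMatrix ℝ)
    (f o : ℝ)
    (hf : IsGreatest (Set.range fun i => B i i) f)
    (ho : IsGreatest {r : ℝ | ∃ i j : Fin n, i ≠ j ∧ |B i j| = r} o) :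
    o ≤ f / (2 * (d : ℝ) - n + 3) + 2 / (n : ℝ) ^ 2 := by
  obtain ⟨⟨i, j, hij, rfl⟩, -⟩ := ho
  have hn : (0 : ℝ) < n := Nat.cast_pos.mpr i.pos
  have hbound := lapMatrix_pinv_offdiag_bound_of_dense_regular_general hG.preconnected hreg
    (by simpa using hd)
    ⟨hB1, hB2, isHermitian_iff_isSymm.mpr hB3, isHermitian_iff_isSymm.mpr hB4⟩ hij
  rw [Fintype.card_fin] at hbound
  calc |B i j| ≤ B j j / (2 * d - n + 3) + 1 / (n * (d + 1)) := hbound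
    _ ≤ f / (2 * d - n + 3) + 1 / (n * (n / 2)) := by
        gcongr
        · linarith
        · exact hf.2 ⟨j, rfl⟩
        · linarith
    _ = f / (2 * d - n + 3) + 2 / (n : ℝ) ^ 2 := by field_simp
end

section
/- Let G be a connected strongly regular graph with parameters (n, k, a, c), not complete (so c ≥ 1), with Laplacian L and Moore–Penrose pseudoinverse B of L. Then for distinct vertices i and j: if i and j are adjacent then B_{ij} = (n − 2k + a − c)/(n²·c), and if i and j are not adjacent then B_{ij} = (a − c − 2k)/(n²·c). -/
/-!
Let `A` be the adjacency matrix, `L` the Laplacian, `J` the all-ones matrix and `P = 1 - J / n` the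
orthogonal projection onto the vectors with coordinate sum zero, so that `L P = L`. Strong
regularity is the identity `A² = (k - c) + (a - c) A + c J`. Substituting `A = k - L` gives a
quadratic equation for `L`, whose constant term is found by applying both sides to the all-ones
vector: `L² = s L - c n P` with `s = 2 k - a + c`. Hence `(c n)⁻¹ (s P - L)` inverts `L` on the
range of `P`, so it is the Moore–Penrose inverse of `L`, and its off-diagonal entries can be
read off.
-/

open Matrix

section MoorePenrose

variable {m n R : Type*} [Fintype m] [Fintype n]

/-- `B` is the Moore–Penrose inverse of `A`. The adjoint is the conjugate transpose with respect to
the involution of `R`, so the trivial involution gives the version with plain transposes. -/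
structure IsMoorePenroseInverse_s16 [NonUnitalSemiring R] [StarRing R]
    (A : Matrix m n R) (B : Matrix n m R) : Prop where
  mul_mul_cancel_left : A * B * A = A
  mul_mul_cancel_right : B * A * B = B
  isHermitian_mul_right : (A * B).IsHermitian
  isHermitian_mul_left : (B * A).IsHermitian

namespace IsMoorePenroseInverse_s16

section Unique

variable [NonUnitalSemiring R] [StarRing R] {A : Matrix m n R} {B C : Matrix n m R}

lemma mul_left_unique (hB : IsMoorePenroseInverse_s16 A B) (hC : IsMoorePenroseInverse_s16 A C) :
    B * A = C * A :=
  calc B * A = (B * A)ᴴ := hB.isHermitian_mul_left.symm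
    _ = ((B * A) * (C * A))ᴴ := by
      rw [Matrix.mul_assoc B, ← Matrix.mul_assoc A, hC.mul_mul_cancel_left]
    _ = C * A * (B * A) := by
      rw [conjTranspose_mul, hB.isHermitian_mul_left, hC.isHermitian_mul_left]
    _ = C * A := by
      rw [Matrix.mul_assoc C, ← Matrix.mul_assoc A, hB.mul_mul_cancel_left]

lemma mul_right_unique (hB : IsMoorePenroseInverse_s16 A B) (hC : IsMoorePenroseInverse_s16 A C) :
    A * B = A * C :=
  calc A * B = (A * B)ᴴ := hB.isHermitian_mul_right.symm
    _ = ((A * C) * (A * B))ᴴ := by rw [← Matrix.mul_assoc, hC.mul_mul_cancel_left]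
    _ = A * B * (A * C) := by
      rw [conjTranspose_mul, hB.isHermitian_mul_right, hC.isHermitian_mul_right]
    _ = A * C := by rw [← Matrix.mul_assoc, hB.mul_mul_cancel_left]

theorem unique (hB : IsMoorePenroseInverse_s16 A B) (hC : IsMoorePenroseInverse_s16 A C) : B = C :=
  calc B = B * A * B := hB.mul_mul_cancel_right.symm
    _ = C * A * C := by
      rw [hB.mul_left_unique hC, Matrix.mul_assoc, hB.mul_right_unique hC, ← Matrix.mul_assoc]
    _ = C := hC.mul_mul_cancel_right

end Unique

theorem of_mul_self_eq_smul_sub_smul {K : Type*} [Field K] [StarRing K] {L P : Matrix m m K}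
    {s t : K} (ht : t ≠ 0) (hP : P.IsHermitian) (hLP : L * P = L)
    (hL : L * L = s • L - t • P) : IsMoorePenroseInverse_s16 L (t⁻¹ • (s • P - L)) := by
  have hP_eq : P = t⁻¹ • (s • L - L * L) := by
    rw [hL, sub_sub_cancel, inv_smul_smul₀ ht]
  have hcomm : P * L = L * P := by
    rw [hP_eq]
    simp only [smul_mul_assoc, mul_smul_comm, sub_mul, mul_sub, Matrix.mul_assoc]
  have hPL : P * L = L := hcomm.trans hLP
  have hPP : P * P = P := by
    nth_rw 1 [hP_eq]
    simp only [smul_mul_assoc, sub_mul, Matrix.mul_assoc, hLP]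
    exact hP_eq.symm
  have hright : L * (t⁻¹ • (s • P - L)) = P := by
    rw [mul_smul_comm, mul_sub, mul_smul_comm, hLP, ← hP_eq]
  have hleft : t⁻¹ • (s • P - L) * L = P := by
    rw [smul_mul_assoc, sub_mul, smul_mul_assoc, hPL, ← hP_eq]
  refine ⟨?_, ?_, ?_, ?_⟩
  · rw [hright, hPL]
  · rw [hleft, mul_smul_comm, mul_sub, mul_smul_comm, hPP, hPL]
  · rwa [hright]
  · rwa [hleft]

end IsMoorePenroseInverse_s16

end MoorePenrose

section CenteringMatrix

variable (V K : Type*) [Fintype V] [DecidableEq V] [Field K]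

/-- The centering matrix `1 - J / |V|`, with `J` the all-ones matrix: it subtracts from a vector
its mean. If `|V|` vanishes in `K`, it is the identity matrix. -/
def centeringMatrix : Matrix V V K := 1 - (Fintype.card V : K)⁻¹ • of 1

lemma centeringMatrix_apply_of_ne {i j : V} (hij : i ≠ j) :
    centeringMatrix V K i j = -(Fintype.card V : K)⁻¹ := by
  simp [centeringMatrix, hij]

lemma isHermitian_centeringMatrix [StarRing K] : (centeringMatrix V K).IsHermitian := by
  ext i j
  simp [centeringMatrix, one_apply, apply_ite star, eq_comm]

end CenteringMatrix

section Graph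

variable {V : Type*} [Fintype V] {G : SimpleGraph V} [DecidableRel G.Adj] {n k a c : ℕ}

lemma exists_not_adj_mem_commonNeighbors {W : Type*} {H : SimpleGraph W} (hH : H.Connected)
    (hne : H ≠ ⊤) : ∃ u v w, u ≠ v ∧ ¬H.Adj u v ∧ w ∈ H.commonNeighbors u v := by
  obtain ⟨x, y, hxy, hnadj⟩ := SimpleGraph.ne_top_iff_exists_not_adj.mp hne
  obtain ⟨p, hp⟩ := hH.exists_walk_length_eq_dist x y
  obtain ⟨u, w, v, huw, hwv, huv, hne⟩ :=
    p.exists_adj_adj_not_adj_ne hp (hH.one_lt_dist_of_ne_of_not_adj hxy hnadj)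
  exact ⟨u, v, w, hne, huv, huw, hwv.symm⟩

lemma ne_zero_of_isSRGWith_of_connected (hsrg : G.IsSRGWith n k a c) (hG : G.Connected)
    (hne : G ≠ ⊤) : c ≠ 0 := by
  obtain ⟨u, v, w, huv, hnadj, hw⟩ := exists_not_adj_mem_commonNeighbors hG hne
  rw [← hsrg.of_not_adj huv hnadj]
  exact (Fintype.card_pos_iff.mpr ⟨w, hw⟩).ne'

variable {R : Type*} [CommRing R]

lemma adjMatrix_mul_self_of_isSRGWith [DecidableEq V] (hsrg : G.IsSRGWith n k a c) :
    G.adjMatrix R * G.adjMatrix R =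
      ((k : R) - c) • 1 + ((a : R) - c) • G.adjMatrix R + (c : R) • of 1 := by
  have hcompl : Gᶜ.adjMatrix R = of 1 - 1 - G.adjMatrix R := by
    rw [← SimpleGraph.adjMatrix_completeGraph_eq_of_one_sub_one,
      ← SimpleGraph.IsCompl.adjMatrix_add_adjMatrix_eq_adjMatrix_completeGraph R
        (isCompl_compl (x := G)),
      add_sub_cancel_left]
  rw [← sq, hsrg.matrix_eq, hcompl]
  simp only [← Nat.cast_smul_eq_nsmul R]
  module

lemma degree_mul_self_of_isSRGWith [Nonempty V] (hsrg : G.IsSRGWith n k a c) :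
    (k : R) * k = k - c + (a - c) * k + c * n := by
  classical
  have hA1 : G.adjMatrix R *ᵥ 1 = (k : R) • 1 := by
    ext i
    simp [hsrg.regular.degree_eq]
  have hJ1 : (of 1 : Matrix V V R) *ᵥ 1 = (n : R) • 1 := by
    ext i
    simp [mulVec, dotProduct, hsrg.card]
  have h := congrArg (· *ᵥ (1 : V → R)) (adjMatrix_mul_self_of_isSRGWith (R := R) hsrg)
  simp only [← mulVec_mulVec, add_mulVec, smul_mulVec, mulVec_smul, one_mulVec, hA1, hJ1] at h
  simpa using congrFun h (Classical.arbitrary V)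

variable [DecidableEq V]

lemma lapMatrix_apply_of_ne {S : Type*} [AddGroupWithOne S] {i j : V} (hij : i ≠ j) :
    G.lapMatrix S i j = -G.adjMatrix S i j := by
  simp [SimpleGraph.lapMatrix, SimpleGraph.degMatrix, hij]

lemma lapMatrix_mul_centeringMatrix {K : Type*} [Field K] :
    G.lapMatrix K * centeringMatrix V K = G.lapMatrix K := by
  have hJ : G.lapMatrix K * of 1 = 0 := by
    ext i
    exact congrFun G.lapMatrix_mulVec_const_eq_zero i
  rw [centeringMatrix, mul_sub, mul_one, mul_smul_comm, hJ, smul_zero, sub_zero]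

lemma adjMatrix_eq_smul_one_sub_lapMatrix {S : Type*} [Ring S]
    (hG : G.IsRegularOfDegree k) :
    G.adjMatrix S = (k : S) • 1 - G.lapMatrix S := by
  ext i j
  obtain rfl | hij := eq_or_ne i j
  · simp [SimpleGraph.lapMatrix, SimpleGraph.degMatrix, hG.degree_eq]
  · simp [lapMatrix_apply_of_ne hij, hij]

lemma lapMatrix_mul_self_of_isSRGWith (hsrg : G.IsSRGWith n k a c) :
    G.lapMatrix R * G.lapMatrix R =
      (2 * k - a + c : R) • G.lapMatrix R - (c * n : R) • 1 + (c : R) • of 1 := by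
  obtain _ | _ := isEmpty_or_nonempty V
  · exact Subsingleton.elim _ _
  have hquad := adjMatrix_mul_self_of_isSRGWith (R := R) hsrg
  have hexpand : G.adjMatrix R * G.adjMatrix R =
      (k * k : R) • 1 - (2 * k : R) • G.lapMatrix R + G.lapMatrix R * G.lapMatrix R := by
    rw [adjMatrix_eq_smul_one_sub_lapMatrix hsrg.regular]
    simp only [sub_mul, mul_sub, smul_mul_assoc, mul_smul_comm, one_mul, mul_one]
    module
  rw [hexpand, adjMatrix_eq_smul_one_sub_lapMatrix hsrg.regular,
    degree_mul_self_of_isSRGWith hsrg, ← eq_sub_iff_add_eq'] at hquad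
  rw [hquad]
  module

variable {K : Type*} [Field K]

lemma lapMatrix_mul_self_eq_sub_smul_centeringMatrix (hsrg : G.IsSRGWith n k a c)
    (hn : (n : K) ≠ 0) :
    G.lapMatrix K * G.lapMatrix K =
      (2 * k - a + c : K) • G.lapMatrix K - (c * n : K) • centeringMatrix V K := by
  rw [lapMatrix_mul_self_of_isSRGWith hsrg, centeringMatrix, hsrg.card, smul_sub, smul_smul,
    mul_inv_cancel_right₀ hn, sub_add]

variable [StarRing K]

theorem isMoorePenroseInverse_lapMatrix_of_isSRGWith (hsrg : G.IsSRGWith n k a c)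
    (hn : (n : K) ≠ 0) (hc : (c : K) ≠ 0) :
    IsMoorePenroseInverse_s16 (G.lapMatrix K)
      ((c * n : K)⁻¹ • ((2 * k - a + c : K) • centeringMatrix V K - G.lapMatrix K)) :=
  .of_mul_self_eq_smul_sub_smul (mul_ne_zero hc hn) (isHermitian_centeringMatrix V K)
    lapMatrix_mul_centeringMatrix (lapMatrix_mul_self_eq_sub_smul_centeringMatrix hsrg hn)

theorem srg_lapMatrix_pinv_offdiag_eq_general (hsrg : G.IsSRGWith n k a c)
    (hn : (n : K) ≠ 0) (hc : (c : K) ≠ 0) {B : Matrix V V K}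
    (hB : IsMoorePenroseInverse_s16 (G.lapMatrix K) B) {i j : V} (hij : i ≠ j) :
    (G.Adj i j → B i j = ((n : K) - 2 * k + a - c) / ((n : K) ^ 2 * c)) ∧
      (¬G.Adj i j → B i j = ((a : K) - c - 2 * k) / ((n : K) ^ 2 * c)) := by
  have hentry : B i j = (c * n : K)⁻¹ * (G.adjMatrix K i j - (2 * k - a + c) * (n : K)⁻¹) := by
    rw [hB.unique (isMoorePenroseInverse_lapMatrix_of_isSRGWith hsrg hn hc), Matrix.smul_apply,
      Matrix.sub_apply, Matrix.smul_apply, centeringMatrix_apply_of_ne V K hij,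
      lapMatrix_apply_of_ne hij, hsrg.card, smul_eq_mul, smul_eq_mul]
    ring
  refine ⟨fun hadj => ?_, fun hadj => ?_⟩
  · rw [hentry, SimpleGraph.adjMatrix_apply, if_pos hadj]
    field_simp
    ring
  · rw [hentry, SimpleGraph.adjMatrix_apply, if_neg hadj]
    field_simp
    ring

end Graph

/-- For a connected, non-complete strongly regular graph with parameters `(n, k, a, c)`,
the off-diagonal entries of the Moore–Penrose pseudoinverse `B` of the Laplacian are
`(n - 2k + a - c)/(n² c)` for adjacent pairs and `(a - c - 2k)/(n² c)` for
non-adjacent pairs. -/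
theorem srg_lapMatrix_pinv_offdiag_eq
    {V : Type*} [Fintype V] [DecidableEq V]
    (G : SimpleGraph V) [DecidableRel G.Adj]
    {n k a c : ℕ}
    (hsrg : G.IsSRGWith n k a c)
    (hG : G.Connected)
    (hnc : G ≠ ⊤)
    (B : Matrix V V ℝ)
    (hB1 : G.lapMatrix ℝ * B * G.lapMatrix ℝ = G.lapMatrix ℝ)
    (hB2 : B * G.lapMatrix ℝ * B = B)
    (hB3 : (G.lapMatrix ℝ * B)ᵀ = G.lapMatrix ℝ * B)
    (hB4 : (B * G.lapMatrix ℝ)ᵀ = B * G.lapMatrix ℝ) :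
    ∀ i j : V, i ≠ j →
      (G.Adj i j →
        B i j = ((n : ℝ) - 2 * k + (a : ℝ) - c) / ((n : ℝ) ^ 2 * c)) ∧
      (¬ G.Adj i j →
        B i j = ((a : ℝ) - c - 2 * k) / ((n : ℝ) ^ 2 * c)) := by
  intro i j hij
  have hn : n ≠ 0 := hsrg.card ▸ (Fintype.card_pos_iff.mpr ⟨i⟩).ne'
  exact srg_lapMatrix_pinv_offdiag_eq_general hsrg (Nat.cast_ne_zero.mpr hn)
    (Nat.cast_ne_zero.mpr (ne_zero_of_isSRGWith_of_connected hsrg hG hnc))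
    ⟨hB1, hB2, isHermitian_iff_isSymm.mpr hB3, isHermitian_iff_isSymm.mpr hB4⟩ hij
end
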